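/- Let E belong to the class A(λ,n,m), let F = ⋃_{j=1}^t g_j(F) be a dust-like self-similar set, let f : F → E be a bi-Lipschitz bijection, and let s = dim_H E = dim_H F. Then the set of ratios { h(F_{w∗j}) / h(F_w) : w a finite word over {1,…,t}, j ∈ {1,…,t} } is a finite subset of ℝ, where w∗j denotes the word w with the letter j appended. -/

import Mathlib

open MeasureTheory Polynomial

/-- The class `𝒜(λ, n, m)` of self-similar subsets of `ℝ` with `m` exact overlaps,
generated by `n` similitudes `fᵢ x = λ x + bᵢ` of the same ratio `λ`. -/
def IsInClassA (lam : ℝ) (n m : ℕ) (E : Set ℝ) : Prop :=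
  lam ∈ Set.Ioo (0 : ℝ) 1 ∧ 1 ≤ m ∧ m + 2 ≤ n ∧
  ∃ b : ℕ → ℝ,
    b 0 = 0 ∧ b (n - 1) = 1 - lam ∧
    (∀ i, i + 1 < n → b i < b (i + 1)) ∧
    (∀ i, i + 1 < n →
      (Set.Icc (b i) (b i + lam) ∩ Set.Icc (b (i + 1)) (b (i + 1) + lam)).Nonempty →
        volume (Set.Icc (b i) (b i + lam) ∩ Set.Icc (b (i + 1)) (b (i + 1) + lam)) = 0 ∨
        volume (Set.Icc (b i) (b i + lam) ∩ Set.Icc (b (i + 1)) (b (i + 1) + lam)) =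
          ENNReal.ofReal (lam * lam)) ∧
    {i : ℕ | i + 1 < n ∧
      volume (Set.Icc (b i) (b i + lam) ∩ Set.Icc (b (i + 1)) (b (i + 1) + lam)) =
        ENNReal.ofReal (lam * lam)}.ncard = m ∧
    E.Nonempty ∧ IsCompact E ∧
    E = ⋃ i ∈ Finset.range n, (fun x => lam * x + b i) '' E

/-- A dust-like self-similar set in `ℝ^d`: the attractor of `t ≥ 2` contracting similitudes
whose images are pairwise disjoint (strong separation condition). -/
def IsDustLike {d : ℕ} (F : Set (EuclideanSpace ℝ (Fin d))) : Prop :=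
  F.Nonempty ∧ IsCompact F ∧
  ∃ t : ℕ, 2 ≤ t ∧
    ∃ (g : Fin t → EuclideanSpace ℝ (Fin d) → EuclideanSpace ℝ (Fin d)) (r : Fin t → ℝ),
      (∀ j, r j ∈ Set.Ioo (0 : ℝ) 1) ∧
      (∀ j x y, dist (g j x) (g j y) = r j * dist x y) ∧
      F = ⋃ j, g j '' F ∧
      (∀ j j', j ≠ j' → Disjoint (g j '' F) (g j' '' F))

/-- Lipschitz equivalence of two sets in (possibly different) metric spaces. -/
def LipEquiv {X Y : Type*} [MetricSpace X] [MetricSpace Y] (A : Set X) (B : Set Y) : Prop :=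
  ∃ f : A → B, Function.Bijective f ∧ ∃ C : ℝ, 0 < C ∧
    ∀ x y : A, C⁻¹ * dist x y ≤ dist (f x) (f y) ∧ dist (f x) (f y) ≤ C * dist x y

/-- The copy `F_w = g_{w₁} ∘ ⋯ ∘ g_{w_k}(F)` of `F` indexed by a finite word `w`. -/
def cylinder {X : Type*} {t : ℕ} (g : Fin t → X → X) (F : Set X) : List (Fin t) → Set X
  | [] => F
  | j :: w => g j '' cylinder g F w

lemma aux_fin_lower {ι : Type*} [Finite ι] (c : ι → ℝ) (hc : ∀ i, 0 < c i) :
    ∃ c0 > 0, ∀ i, c0 ≤ c i := by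
  rcases isEmpty_or_nonempty ι with h | h
  · exact ⟨1, one_pos, fun i => (h.false i).elim⟩
  · obtain ⟨i, hi⟩ := Finite.exists_min c
    exact ⟨c i, hc i, hi⟩

lemma aux_simil {X Y : Type*} [MetricSpace X] [MetricSpace Y]
    [MeasurableSpace X] [BorelSpace X] [MeasurableSpace Y] [BorelSpace Y]
    (φ : X → Y) (ρ : ℝ) (hρ : 0 < ρ) (h : ∀ x y, dist (φ x) (φ y) = ρ * dist x y)
    (s : ℝ) (hs : 0 ≤ s) (A : Set X) :
    (μH[s] (φ '' A)).toReal = ρ ^ s * (μH[s] A).toReal := by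
  have h1 : LipschitzWith ρ.toNNReal φ := by
    apply LipschitzWith.of_dist_le_mul
    intro x y
    rw [h, Real.coe_toNNReal _ hρ.le]
  have h2 : AntilipschitzWith (ρ.toNNReal)⁻¹ φ := by
    apply AntilipschitzWith.of_le_mul_dist
    intro x y
    rw [h, NNReal.coe_inv, Real.coe_toNNReal _ hρ.le, inv_mul_cancel_left₀ hρ.ne']
  have h3 := h1.hausdorffMeasure_image_le hs A
  have h4 := h2.le_hausdorffMeasure_image hs A
  have hne : (ρ.toNNReal : ENNReal) ≠ 0 := by
    simpa using hρ
  have hne' : (ρ.toNNReal : ENNReal) ^ s ≠ 0 := by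
    simp [ENNReal.rpow_eq_zero_iff, hρ, hρ.le]
  have hnt' : (ρ.toNNReal : ENNReal) ^ s ≠ ⊤ :=
    ENNReal.rpow_ne_top_of_nonneg hs ENNReal.coe_ne_top
  have h5 : (ρ.toNNReal : ENNReal) ^ s * μH[s] A ≤ μH[s] (φ '' A) := by
    calc _ ≤ (ρ.toNNReal : ENNReal) ^ s *
        ((((ρ.toNNReal)⁻¹ : NNReal) : ENNReal) ^ s * μH[s] (φ '' A)) := by gcongr
      _ = μH[s] (φ '' A) := by
        rw [ENNReal.coe_inv (by simpa using hρ), ENNReal.inv_rpow, ← mul_assoc,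
          ENNReal.mul_inv_cancel hne' hnt', one_mul]
  rw [le_antisymm h3 h5, ENNReal.toReal_mul, ← ENNReal.toReal_rpow]
  simp [hρ.le]

/-- one refinement step on normalised differences -/
def stepSet (lam : ℝ) (D A : Set ℝ) : Set ℝ := Set.image2 (fun a d => (a + d) / lam) A D

def iterSet (lam : ℝ) (D T : Set ℝ) : ℕ → Set ℝ
  | 0 => stepSet lam D T
  | q + 1 => stepSet lam D (iterSet lam D T q)

lemma iterSet_finite (lam : ℝ) (D T : Set ℝ) (hD : D.Finite) (hT : T.Finite) (q : ℕ) :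
    (iterSet lam D T q).Finite := by
  induction q with
  | zero => exact hT.image2 _ hD
  | succ q ih => exact ih.image2 _ hD

/-- level `k` offsets -/
def offs (lam : ℝ) (n : ℕ) (b : ℕ → ℝ) : ℕ → Set ℝ
  | 0 => {0}
  | k + 1 => {y | ∃ x ∈ offs lam n b k, ∃ i < n, y = x + lam ^ k * b i}

lemma offs_cover (lam : ℝ) (n : ℕ) (b : ℕ → ℝ) (E : Set ℝ)
    (hE : E = ⋃ i ∈ Finset.range n, (fun x => lam * x + b i) '' E) (k : ℕ) (y : ℝ) :
    y ∈ E ↔ ∃ x ∈ offs lam n b k, ∃ e ∈ E, y = lam ^ k * e + x := by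
  have hE' : ∀ y, y ∈ E ↔ ∃ i < n, ∃ e ∈ E, y = lam * e + b i := by
    intro y
    conv_lhs => rw [hE]
    simp [eq_comm]
  induction k generalizing y with
  | zero => simp [offs]
  | succ k ih =>
    refine (ih y).trans ?_
    constructor
    · rintro ⟨x, hx, e, he, rfl⟩
      obtain ⟨i, hi, e', he', rfl⟩ := (hE' e).1 he
      exact ⟨_, ⟨x, hx, i, hi, rfl⟩, e', he', by ring⟩
    · rintro ⟨_, ⟨x, hx, i, hi, rfl⟩, e, he, rfl⟩
      exact ⟨x, hx, lam * e + b i, (hE' _).2 ⟨i, hi, e, he, rfl⟩, by ring⟩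

lemma gap_lemma (lam : ℝ) (n : ℕ) (b : ℕ → ℝ) (h0 : 0 < lam) (h1 : lam < 1) (hn : 3 ≤ n)
    (hb0 : b 0 = 0) (hbn : b (n - 1) = 1 - lam)
    (hmono : ∀ i, i + 1 < n → b i < b (i + 1))
    (hov : ∀ i, i + 1 < n →
      (Set.Icc (b i) (b i + lam) ∩ Set.Icc (b (i + 1)) (b (i + 1) + lam)).Nonempty →
        volume (Set.Icc (b i) (b i + lam) ∩ Set.Icc (b (i + 1)) (b (i + 1) + lam)) = 0 ∨
        volume (Set.Icc (b i) (b i + lam) ∩ Set.Icc (b (i + 1)) (b (i + 1) + lam)) =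
          ENNReal.ofReal (lam * lam)) :
    ∀ i j, j ≤ i → i < n →
      b i - b j = 0 ∨ b i - b j = lam * (1 - lam) ∨ lam ≤ b i - b j := by
  have hm : ∀ i j, j ≤ i → i < n → b j ≤ b i := by
    intro i j hij
    induction i, hij using Nat.le_induction with
    | base => intro _; exact le_rfl
    | succ i hi ih => intro h; exact (ih (by omega)).trans (hmono i h).le
  have hg : ∀ i, i + 1 < n → b (i + 1) - b i = lam * (1 - lam) ∨ lam ≤ b (i + 1) - b i := by
    intro i hi
    by_cases hc : lam ≤ b (i + 1) - b i
    · exact Or.inr hc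
    push Not at hc
    have hlt := hmono i hi
    have hint : Set.Icc (b i) (b i + lam) ∩ Set.Icc (b (i + 1)) (b (i + 1) + lam)
        = Set.Icc (b (i + 1)) (b i + lam) := by
      rw [Set.Icc_inter_Icc, sup_eq_right.2 hlt.le, inf_eq_left.2 (by linarith)]
    have := hov i hi (by rw [hint]; exact ⟨b (i + 1), le_rfl, by linarith⟩)
    rw [hint, Real.volume_Icc] at this
    rcases this with h | h
    · rw [ENNReal.ofReal_eq_zero] at h
      linarith
    · rw [ENNReal.ofReal_eq_ofReal_iff (by linarith) (by positivity)] at h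
      left; linarith
  have hl : 0 < lam * (1 - lam) := mul_pos h0 (by linarith)
  have hg' : ∀ i, i + 1 < n → lam * (1 - lam) ≤ b (i + 1) - b i := by
    intro i hi
    rcases hg i hi with h | h
    · linarith
    · nlinarith
  have hhalf : lam ≤ 1 / 2 := by
    have e1 := hg' 0 (by omega)
    have e2 := hg' 1 (by omega)
    have e3 := hm (n - 1) 2 (by omega) (by omega)
    norm_num at e1 e2
    by_contra hcon
    push Not at hcon
    nlinarith
  intro i j hji hi
  obtain ⟨a, rfl⟩ := Nat.exists_eq_add_of_le hji
  match a with
  | 0 => left; simp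
  | 1 => right; exact hg j hi
  | a + 2 =>
    right; right
    have e1 := hg' j (by omega)
    have e2 := hg' (j + 1) (by omega)
    have e3 := hm (j + (a + 2)) (j + 1 + 1) (by omega) hi
    nlinarith

/-- finite type -/
lemma finite_type (lam : ℝ) (n : ℕ) (b : ℕ → ℝ) (h0 : 0 < lam) (h1 : lam < 1)
    (hn : 3 ≤ n) (hb0 : b 0 = 0) (hbn : b (n - 1) = 1 - lam)
    (hgap : ∀ i j, j ≤ i → i < n →
      b i - b j = 0 ∨ b i - b j = lam * (1 - lam) ∨ lam ≤ b i - b j)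
    (hhalf : lam ≤ 1 / 2) (C : ℝ) :
    ∃ Γ : Set ℝ, Γ.Finite ∧ ∀ k, ∀ x ∈ offs lam n b k, ∀ y ∈ offs lam n b k,
      |x - y| ≤ C * lam ^ k → (x - y) / lam ^ k ∈ Γ := by
  have hl : 0 < lam * (1 - lam) := mul_pos h0 (by linarith)
  have hnn : ∀ i j, j ≤ i → i < n → 0 ≤ b i - b j := by
    intro i j hij hi
    rcases hgap i j hij hi with h | h | h <;> linarith
  set D : Set ℝ := (fun p : ℕ × ℕ => b p.1 - b p.2) '' (Set.Iio n ×ˢ Set.Iio n) with hDdef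
  have hD : D.Finite := ((Set.finite_Iio n).prod (Set.finite_Iio n)).image _
  have hDbd : ∀ d ∈ D, |d| ≤ 1 - lam := by
    rintro _ ⟨⟨i, j⟩, ⟨hi, hj⟩, rfl⟩
    simp only [Set.mem_Iio] at hi hj
    have e1 := hnn i 0 (by omega) hi
    have e2 := hnn j 0 (by omega) hj
    have e3 := hnn (n - 1) i (by omega) (by omega)
    have e4 := hnn (n - 1) j (by omega) (by omega)
    simp only
    rw [abs_le]; constructor <;> linarith
  -- dichotomies
  have hD0 : ∀ d ∈ D, d = 0 ∨ d = lam * (1 - lam) ∨ d = - (lam * (1 - lam)) ∨ lam ≤ |d| := by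
    rintro _ ⟨⟨i, j⟩, ⟨hi, hj⟩, rfl⟩
    simp only [Set.mem_Iio] at hi hj
    simp only
    rcases le_total j i with h | h
    · rcases hgap i j h hi with h | h | h
      · exact Or.inl h
      · exact Or.inr (Or.inl h)
      · exact Or.inr (Or.inr (Or.inr (h.trans (le_abs_self _))))
    · rcases hgap j i h hj with h | h | h
      · left; linarith
      · right; right; left; linarith
      · right; right; right
        rw [abs_sub_comm]
        exact (h.trans (le_abs_self _))
  have hD1 : ∀ d ∈ D, 1 - lam + d = 0 ∨ 1 - lam + d = lam * (1 - lam) ∨ lam ≤ 1 - lam + d := by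
    rintro _ ⟨⟨i, j⟩, ⟨hi, hj⟩, rfl⟩
    simp only [Set.mem_Iio] at hi hj
    simp only
    have e1 := hgap i 0 (by omega) hi
    have e2 := hgap (n - 1) j (by omega) (by omega)
    have e3 := hnn i 0 (by omega) hi
    have e4 := hnn (n - 1) j (by omega) (by omega)
    rw [hb0] at e1 e3
    rw [hbn] at e2 e4
    rcases e1 with e1 | e1 | e1
    · rcases e2 with e2 | e2 | e2
      · left; linarith
      · right; left; linarith
      · right; right; linarith
    · rcases e2 with e2 | e2 | e2
      · right; left; linarith
      · right; right; nlinarith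
      · right; right; linarith
    · right; right; linarith
  have hDneg : ∀ d ∈ D, -d ∈ D := by
    rintro _ ⟨⟨i, j⟩, ⟨hi, hj⟩, rfl⟩
    exact ⟨(j, i), ⟨hj, hi⟩, by simp⟩
  set T : Set ℝ := {0, 1 - lam, -(1 - lam), 1, -1} with hTdef
  have hT : T.Finite := by simp [hTdef]
  have hpos : ∀ z, lam ≤ z → z / lam = 1 ∨ 1 < |z / lam| := by
    intro z hz
    have : 1 ≤ z / lam := by rwa [le_div_iff₀ h0, one_mul]
    rcases this.eq_or_lt with h | h
    · exact Or.inl h.symm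
    · exact Or.inr (h.trans_le (le_abs_self _))
  have hstepT' : ∀ a, (a = 0 ∨ a = 1 - lam ∨ a = 1) → ∀ d ∈ D,
      (a + d) / lam ∈ T ∨ 1 < |(a + d) / lam| := by
    rintro a (rfl | rfl | rfl) d hd
    · rcases hD0 d hd with h | h | h | h
      · left; simp [hTdef, h]
      · left
        have : (0 + d) / lam = 1 - lam := by rw [h]; field_simp; ring
        rw [this]; simp [hTdef]
      · left
        have : (0 + d) / lam = -(1 - lam) := by rw [h]; field_simp; ring
        rw [this]; simp [hTdef]
      · rw [zero_add]
        rcases abs_cases d with ⟨h', _⟩ | ⟨h', _⟩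
        · rw [h'] at h
          rcases hpos _ h with h | h
          · left; rw [h]; simp [hTdef]
          · exact Or.inr h
        · rw [h'] at h
          rcases hpos _ h with h | h
          · left
            have : d / lam = -1 := by rw [neg_div] at h; linarith
            rw [this]; simp [hTdef]
          · right; rwa [neg_div, abs_neg] at h
    · rcases hD1 d hd with h | h | h
      · left; simp [hTdef, h]
      · left
        have : (1 - lam + d) / lam = 1 - lam := by rw [h]; field_simp
        rw [this]; simp [hTdef]
      · rcases hpos _ h with h | h
        · left; rw [h]; simp [hTdef]
        · exact Or.inr h
    · have := (abs_le.1 (hDbd d hd)).1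
      rcases hpos (1 + d) (by linarith) with h | h
      · left; rw [h]; simp [hTdef]
      · exact Or.inr h
  have hTneg : ∀ a ∈ T, -a ∈ T := by
    intro a ha
    simp only [hTdef, Set.mem_insert_iff, Set.mem_singleton_iff] at ha ⊢
    rcases ha with rfl | rfl | rfl | rfl | rfl <;> simp
  have hstepT : ∀ a ∈ T, ∀ d ∈ D, (a + d) / lam ∈ T ∨ 1 < |(a + d) / lam| := by
    intro a ha d hd
    have key : (a = 0 ∨ a = 1 - lam ∨ a = 1) ∨ (-a = 0 ∨ -a = 1 - lam ∨ -a = 1) := by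
      simp only [hTdef, Set.mem_insert_iff, Set.mem_singleton_iff] at ha
      rcases ha with rfl | rfl | rfl | rfl | rfl <;> simp
    rcases key with h | h
    · exact hstepT' a h d hd
    · have e : (-a + -d) / lam = -((a + d) / lam) := by ring
      have := hstepT' (-a) h (-d) (hDneg d hd)
      rw [e, abs_neg] at this
      rcases this with h | h
      · left; simpa using hTneg _ h
      · exact Or.inr h
  -- epsilon
  obtain ⟨ε, hε, hεP⟩ : ∃ ε > 0, ∀ p ∈ stepSet lam D T, 1 < |p| → 1 + ε ≤ |p| := by
    have hfin : {p | p ∈ stepSet lam D T ∧ 1 < |p|}.Finite :=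
      (hT.image2 _ hD).subset (fun p hp => hp.1)
    have := hfin.to_subtype
    obtain ⟨c, hc, hcl⟩ := aux_fin_lower
      (fun p : {p | p ∈ stepSet lam D T ∧ 1 < |p|} => |p.1| - 1) (fun p => by
        have := p.2.2
        linarith)
    refine ⟨c, hc, fun p hp h => ?_⟩
    have := hcl ⟨p, hp, h⟩
    simp only at this
    linarith
  have hinv : ∀ k, ∀ x ∈ offs lam n b k, ∀ y ∈ offs lam n b k,
      (x - y) / lam ^ k ∈ T ∨
      ∃ q, (x - y) / lam ^ k ∈ iterSet lam D T q ∧ 1 + ε / lam ^ q ≤ |(x - y) / lam ^ k| := by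
    intro k
    induction k with
    | zero =>
      intro x hx y hy
      simp only [offs, Set.mem_singleton_iff] at hx hy
      left; simp [hx, hy, hTdef]
    | succ k ih =>
      rintro _ ⟨x, hx, i, hi, rfl⟩ _ ⟨y, hy, j, hj, rfl⟩
      have hd : b i - b j ∈ D := ⟨(i, j), ⟨hi, hj⟩, rfl⟩
      have e : (x + lam ^ k * b i - (y + lam ^ k * b j)) / lam ^ (k + 1)
          = ((x - y) / lam ^ k + (b i - b j)) / lam := by
        have : lam ^ k ≠ 0 := by positivity
        field_simp
        ring
      rw [e]
      rcases ih x hx y hy with h | ⟨q, hq, hq'⟩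
      · rcases hstepT _ h _ hd with h' | h'
        · exact Or.inl h'
        · right
          have hm : ((x - y) / lam ^ k + (b i - b j)) / lam ∈ stepSet lam D T :=
            Set.mem_image2_of_mem h hd
          exact ⟨0, hm, by simpa using hεP _ hm h'⟩
      · right
        refine ⟨q + 1, Set.mem_image2_of_mem hq hd, ?_⟩
        have h2 := hDbd _ hd
        have h3 : |(x - y) / lam ^ k| - |b i - b j| ≤ |(x - y) / lam ^ k + (b i - b j)| := by
          have := abs_sub_abs_le_abs_sub ((x - y) / lam ^ k) (-(b i - b j))
          rwa [abs_neg, sub_neg_eq_add] at this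
        rw [abs_div, abs_of_pos h0, le_div_iff₀ h0]
        have e2 : (1 + ε / lam ^ (q + 1)) * lam = lam + ε / lam ^ q := by
          have : lam ^ q ≠ 0 := by positivity
          rw [pow_succ]
          field_simp
        rw [e2]
        linarith
  obtain ⟨Q, hQ⟩ : ∃ Q : ℕ, ∀ q, 1 + ε / lam ^ q ≤ C → q < Q := by
    obtain ⟨Q, hQ⟩ := pow_unbounded_of_one_lt (C / ε) ((one_lt_inv₀ h0).2 h1)
    refine ⟨Q, fun q hq => ?_⟩
    by_contra hcon
    push Not at hcon
    have h3 : (lam⁻¹) ^ Q ≤ (lam⁻¹) ^ q := pow_le_pow_right₀ ((one_lt_inv₀ h0).2 h1).le hcon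
    have h4 : C / ε < (lam⁻¹) ^ q := hQ.trans_le h3
    rw [div_lt_iff₀ hε, inv_pow, mul_comm, ← div_eq_mul_inv] at h4
    linarith
  refine ⟨T ∪ ⋃ q ∈ Set.Iio Q, iterSet lam D T q, hT.union
    ((Set.finite_Iio Q).biUnion fun q _ => iterSet_finite lam D T hD hT q), ?_⟩
  intro k x hx y hy hxy
  rcases hinv k x hx y hy with h | ⟨q, hq, hq'⟩
  · exact Or.inl h
  · right
    have : |(x - y) / lam ^ k| ≤ C := by
      rw [abs_div, abs_of_pos (pow_pos h0 k), div_le_iff₀ (pow_pos h0 k)]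
      exact hxy
    exact Set.mem_biUnion (hQ q (hq'.trans this)) hq

lemma cyl_sub {X : Type*} {t : ℕ} (g : Fin t → X → X) (F : Set X)
    (hF : ∀ j, g j '' F ⊆ F) (w v : List (Fin t)) :
    cylinder g F (w ++ v) ⊆ cylinder g F w := by
  induction w with
  | nil =>
    simp only [List.nil_append, _root_.cylinder]
    induction v with
    | nil => exact subset_rfl
    | cons j v ih => exact (Set.image_mono ih).trans (hF j)
  | cons j w ih => exact Set.image_mono ih

lemma cyl_nonempty {X : Type*} {t : ℕ} (g : Fin t → X → X) (F : Set X)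
    (hF : F.Nonempty) (w : List (Fin t)) : (cylinder g F w).Nonempty := by
  induction w with
  | nil => exact hF
  | cons j w ih => exact ih.image _

lemma prod_pos_aux {t : ℕ} (r : Fin t → ℝ) (hr : ∀ j, r j ∈ Set.Ioo (0 : ℝ) 1)
    (w : List (Fin t)) : 0 < (w.map r).prod ∧ (w.map r).prod ≤ 1 := by
  induction w with
  | nil => simp
  | cons j w ih =>
    simp only [List.map_cons, List.prod_cons]
    exact ⟨mul_pos (hr j).1 ih.1, mul_le_one₀ (hr j).2.le ih.1.le ih.2⟩

lemma cyl_diam {X : Type*} [MetricSpace X] {t : ℕ} (g : Fin t → X → X) (F : Set X) (r : Fin t → ℝ)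
    (hr : ∀ j, r j ∈ Set.Ioo (0 : ℝ) 1)
    (hg : ∀ j x y, dist (g j x) (g j y) = r j * dist x y) (R : ℝ)
    (hR : ∀ x ∈ F, ∀ y ∈ F, dist x y ≤ R) (w : List (Fin t)) :
    ∀ x ∈ cylinder g F w, ∀ y ∈ cylinder g F w, dist x y ≤ (w.map r).prod * R := by
  induction w with
  | nil => simpa [_root_.cylinder] using hR
  | cons j w ih =>
    rintro _ ⟨x, hx, rfl⟩ _ ⟨y, hy, rfl⟩
    rw [hg, List.map_cons, List.prod_cons, mul_assoc]
    exact mul_le_mul_of_nonneg_left (ih x hx y hy) (hr j).1.le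

lemma cyl_sep {X : Type*} [MetricSpace X] {t : ℕ} (g : Fin t → X → X) (F : Set X) (r : Fin t → ℝ)
    (hr : ∀ j, r j ∈ Set.Ioo (0 : ℝ) 1)
    (hg : ∀ j x y, dist (g j x) (g j y) = r j * dist x y)
    (hFattr : F = ⋃ j, g j '' F) (c : ℝ) (hc : 0 < c)
    (hsep : ∀ j j', j ≠ j' → ∀ x ∈ g j '' F, ∀ y ∈ g j' '' F, c ≤ dist x y)
    (w : List (Fin t)) :
    ∀ x ∈ cylinder g F w, ∀ y ∈ F, y ∉ cylinder g F w → (w.map r).prod * c ≤ dist x y := by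
  have hF : ∀ j, g j '' F ⊆ F := by
    intro j
    conv_rhs => rw [hFattr]
    exact Set.subset_iUnion (fun j => g j '' F) j
  induction w with
  | nil => intro x hx y hy hy'; exact (hy' hy).elim
  | cons j w ih =>
    rintro _ ⟨x, hx, rfl⟩ y hy hy'
    rw [hFattr] at hy
    obtain ⟨j', hj'⟩ := Set.mem_iUnion.1 hy
    have hxF : x ∈ F := by
      have := cyl_sub g F hF [] w
      exact this hx
    by_cases hjj : j = j'
    · subst hjj
      obtain ⟨y, hy2, rfl⟩ := hj'
      rw [hg, List.map_cons, List.prod_cons, mul_assoc]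
      refine mul_le_mul_of_nonneg_left (ih x hx y hy2 ?_) (hr j).1.le
      intro hcon
      exact hy' ⟨y, hcon, rfl⟩
    · refine le_trans ?_ (hsep j j' hjj _ ⟨x, hxF, rfl⟩ y hj')
      have := (prod_pos_aux r hr (j :: w)).2
      nlinarith

lemma cyl_meas {d t : ℕ} (F : Set (EuclideanSpace ℝ (Fin d)))
    (g : Fin t → EuclideanSpace ℝ (Fin d) → EuclideanSpace ℝ (Fin d))
    (r : Fin t → ℝ)
    (hr : ∀ j, r j ∈ Set.Ioo (0 : ℝ) 1)
    (hg : ∀ j x y, dist (g j x) (g j y) = r j * dist x y) (s : ℝ) (hs : 0 ≤ s)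
    (w : List (Fin t)) :
    (μH[s] (cylinder g F w)).toReal = ((w.map r).prod) ^ s * (μH[s] F).toReal := by
  induction w with
  | nil => simp [_root_.cylinder]
  | cons j w ih =>
    rw [_root_.cylinder, aux_simil (g j) (r j) (hr j).1 (hg j) s hs, ih, List.map_cons, List.prod_cons,
      Real.mul_rpow (hr j).1.le (prod_pos_aux r hr w).1.le, mul_assoc]

lemma piece_meas (lam : ℝ) (n : ℕ) (b : ℕ → ℝ) (h0 : 0 < lam) (E : Set ℝ)
    (hE : E = ⋃ i ∈ Finset.range n, (fun x => lam * x + b i) '' E) (hEne : E.Nonempty)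
    (Γ : Set ℝ) (C : ℝ)
    (hΓ : ∀ k, ∀ x ∈ offs lam n b k, ∀ y ∈ offs lam n b k,
      |x - y| ≤ C * lam ^ k → (x - y) / lam ^ k ∈ Γ)
    (R : ℝ) (hR : ∀ x ∈ E, ∀ y ∈ E, dist x y ≤ R) (s : ℝ) (hs : 0 ≤ s)
    (k : ℕ) (P : Set ℝ) (hPE : P ⊆ E) (hPne : P.Nonempty)
    (hdiam : ∀ x ∈ P, ∀ y ∈ P, dist x y ≤ C * lam ^ k)
    (hsep : ∀ x ∈ P, ∀ y ∈ E, y ∉ P → lam ^ k * R < dist x y) :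
    ∃ G ∈ Γ.powerset, (μH[s] P).toReal =
      (lam ^ k) ^ s * (μH[s] (⋃ γ ∈ G, (fun x => x + γ) '' E)).toReal := by
  have hk : 0 < lam ^ k := pow_pos h0 k
  obtain ⟨p, hp⟩ := hPne
  obtain ⟨x0, hx0, e0, he0, rfl⟩ := (offs_cover lam n b E hE k p).1 (hPE hp)
  have hwhole : ∀ x ∈ offs lam n b k, ∀ e ∈ E, lam ^ k * e + x ∈ P →
      ∀ e' ∈ E, lam ^ k * e' + x ∈ P := by
    intro x hx e he hmem e' he'
    by_contra hcon
    have h1 := hsep _ hmem _ ((offs_cover lam n b E hE k _).2 ⟨x, hx, e', he', rfl⟩) hcon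
    rw [dist_add_right, Real.dist_eq, ← mul_sub, abs_mul, abs_of_pos hk, ← Real.dist_eq] at h1
    have := hR e he e' he'
    nlinarith
  set G : Set ℝ := {γ | γ ∈ Γ ∧ x0 + lam ^ k * γ ∈ offs lam n b k ∧
    ∀ e ∈ E, lam ^ k * e + (x0 + lam ^ k * γ) ∈ P} with hG
  refine ⟨G, fun γ h => h.1, ?_⟩
  have hP : P = (fun x => lam ^ k * x + x0) '' (⋃ γ ∈ G, (fun x => x + γ) '' E) := by
    ext y
    simp only [Set.mem_image, Set.mem_iUnion, exists_prop]
    constructor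
    · intro hy
      obtain ⟨x, hx, e, he, rfl⟩ := (offs_cover lam n b E hE k y).1 (hPE hy)
      have hall := hwhole x hx e he hy
      have hd := hdiam _ (hall e0 he0) _ hp
      rw [dist_add_left, Real.dist_eq] at hd
      have hx' : x0 + lam ^ k * ((x - x0) / lam ^ k) = x := by field_simp; ring
      refine ⟨e + (x - x0) / lam ^ k, ⟨_, ⟨hΓ k x hx x0 hx0 hd, ?_, ?_⟩, e, he, rfl⟩, ?_⟩
      · rw [hx']; exact hx
      · rw [hx']; exact hall
      · field_simp; ring
    · rintro ⟨_, ⟨γ, hγ, e, he, rfl⟩, rfl⟩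
      have := hγ.2.2 e he
      convert this using 1
      ring
  conv_lhs => rw [hP]
  apply aux_simil _ _ hk _ s hs
  intro x y
  rw [dist_add_right, Real.dist_eq, ← mul_sub, abs_mul, abs_of_pos hk, ← Real.dist_eq]

/-- **Lemma 3.** With `E ∈ 𝒜(λ, n, m)`, `F` dust-like, `f : F → E`
a bi-Lipschitz bijection, `s` the common Hausdorff dimension and
`h(B) = H^s(f(B))/H^s(B)`, the set of ratios `h(F_{w∗j})/h(F_w)` is finite. -/
theorem finiteness_of_density_ratios
    (lam : ℝ) (n m : ℕ) (E : Set ℝ) (hE : IsInClassA lam n m E)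
    (d t : ℕ) (ht : 2 ≤ t)
    (F : Set (EuclideanSpace ℝ (Fin d)))
    (g : Fin t → EuclideanSpace ℝ (Fin d) → EuclideanSpace ℝ (Fin d))
    (r : Fin t → ℝ)
    (hr : ∀ j, r j ∈ Set.Ioo (0 : ℝ) 1)
    (hg : ∀ j x y, dist (g j x) (g j y) = r j * dist x y)
    (hFne : F.Nonempty) (hFc : IsCompact F)
    (hFattr : F = ⋃ j, g j '' F)
    (hsep : ∀ j j', j ≠ j' → Disjoint (g j '' F) (g j' '' F))
    (f : EuclideanSpace ℝ (Fin d) → ℝ)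
    (hfim : f '' F = E) (hfinj : Set.InjOn f F)
    (Cf : ℝ) (hCf : 0 < Cf)
    (hbilip : ∀ x ∈ F, ∀ y ∈ F,
      Cf⁻¹ * dist x y ≤ dist (f x) (f y) ∧ dist (f x) (f y) ≤ Cf * dist x y)
    (s : ℝ) (hs : 0 ≤ s)
    (hsE : dimH E = ENNReal.ofReal s) (hsF : dimH F = ENNReal.ofReal s) :
    {x : ℝ | ∃ (w : List (Fin t)) (j : Fin t),
      x = ((μH[s] (f '' cylinder g F (w ++ [j]))).toReal /
            (μH[s] (cylinder g F (w ++ [j]))).toReal) /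
          ((μH[s] (f '' cylinder g F w)).toReal /
            (μH[s] (cylinder g F w)).toReal)}.Finite := by
  classical
  obtain ⟨⟨h0, h1⟩, hm1, hmn, b, hb0, hbn, hmono, hov, -, hEne, hEc, hEattr⟩ := hE
  have hn : 3 ≤ n := by omega
  have hgap := gap_lemma lam n b h0 h1 hn hb0 hbn hmono hov
  have hhalf : lam ≤ 1 / 2 := by
    have e1 := hgap 1 0 (by omega) (by omega)
    have e2 := hgap 2 1 (by omega) (by omega)
    have e3 := hgap (n - 1) 2 (by omega) (by omega)
    have f1 := hmono 0 (by omega)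
    have f2 := hmono 1 (by omega)
    norm_num at f1 f2
    have hl : 0 < lam * (1 - lam) := mul_pos h0 (by linarith)
    have e1' : lam * (1 - lam) ≤ b 1 - b 0 := by
      rcases e1 with e | e | e
      · linarith
      · linarith
      · nlinarith
    have e2' : lam * (1 - lam) ≤ b 2 - b 1 := by
      rcases e2 with e | e | e
      · linarith
      · linarith
      · nlinarith
    have e3' : 0 ≤ b (n - 1) - b 2 := by
      rcases e3 with e | e | e <;> linarith
    by_contra hcon
    push Not at hcon
    nlinarith
  have hF : ∀ j, g j '' F ⊆ F := by
    intro j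
    conv_rhs => rw [hFattr]
    exact Set.subset_iUnion (fun j => g j '' F) j
  have hcylF : ∀ w, cylinder g F w ⊆ F := fun w => cyl_sub g F hF [] w
  have hgc : ∀ j, IsCompact (g j '' F) := by
    intro j
    apply hFc.image
    have : LipschitzWith (r j).toNNReal (g j) := by
      apply LipschitzWith.of_dist_le_mul
      intro x y
      rw [hg, Real.coe_toNNReal _ (hr j).1.le]
    exact this.continuous
  -- separation constant
  obtain ⟨c, hc, hcsep⟩ : ∃ c > 0, ∀ j j', j ≠ j' →
      ∀ x ∈ g j '' F, ∀ y ∈ g j' '' F, c ≤ dist x y := by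
    have : ∀ p : {p : Fin t × Fin t // p.1 ≠ p.2}, ∃ c : ℝ, 0 < c ∧
        ∀ x ∈ g p.1.1 '' F, ∀ y ∈ g p.1.2 '' F, c ≤ dist x y := by
      rintro ⟨⟨j, j'⟩, hne⟩
      obtain ⟨ρ, hρ, hh⟩ := Metric.exists_pos_forall_lt_edist (hgc j) (hgc j').isClosed
        (hsep j j' hne)
      refine ⟨ρ, hρ, fun x hx y hy => ?_⟩
      have := hh x hx y hy
      rw [edist_nndist, ENNReal.coe_lt_coe] at this
      exact_mod_cast this.le
    choose c hc hc' using this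
    obtain ⟨c0, hc0, hcl⟩ := aux_fin_lower c hc
    exact ⟨c0, hc0, fun j j' hne x hx y hy =>
      (hcl ⟨(j, j'), hne⟩).trans (hc' ⟨(j, j'), hne⟩ x hx y hy)⟩
  obtain ⟨rm, hrm, hrml⟩ := aux_fin_lower r (fun j => (hr j).1)
  obtain ⟨RF, hRF⟩ := Metric.isBounded_iff.1 hFc.isBounded
  obtain ⟨RE, hRE⟩ := Metric.isBounded_iff.1 hEc.isBounded
  -- separation at unit scale, shrunk for children
  obtain ⟨κ, hκdef⟩ : ∃ κ, κ = Cf⁻¹ * (min rm 1 * c) := ⟨_, rfl⟩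
  have hκ : 0 < κ := by
    rw [hκdef]; have : 0 < min rm 1 := lt_min hrm one_pos
    positivity
  obtain ⟨R, hRdef⟩ : ∃ R, R = max RE (max κ 1) := ⟨_, rfl⟩
  have hRE' : RE ≤ R := by rw [hRdef]; exact le_max_left _ _
  have hRκ : κ ≤ R := by rw [hRdef]; exact (le_max_left _ _).trans (le_max_right _ _)
  have hRpos : 0 < R := hκ.trans_le hRκ
  have hRF0 : 0 ≤ RF := by
    obtain ⟨x, hx⟩ := hFne
    simpa using hRF hx hx
  obtain ⟨C, hCdef⟩ : ∃ C, C = Cf * RF * (R / (κ * lam)) := ⟨_, rfl⟩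
  obtain ⟨Γ, hΓfin, hΓ⟩ := finite_type lam n b h0 h1 hn hb0 hbn hgap hhalf C
  obtain ⟨V, hV⟩ : ∃ V : Set ℝ → ℝ, ∀ G, V G =
    (μH[s] (⋃ γ ∈ G, (fun x => x + γ) '' E)).toReal := ⟨_, fun _ => rfl⟩
  have hpow : (Γ.powerset).Finite := hΓfin.powerset
  have hbig : (insert (0 : ℝ) ((fun p : (Set ℝ × Set ℝ) × Fin t => V p.1.1 / V p.1.2 / (r p.2) ^ s) ''
      ((Γ.powerset ×ˢ Γ.powerset) ×ˢ Set.univ))).Finite :=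
    (((hpow.prod hpow).prod Set.finite_univ).image _).insert 0
  refine hbig.subset ?_
  rintro x ⟨w, j, rfl⟩
  obtain ⟨hw0, hw1⟩ := prod_pos_aux r hr w
  set ρ := (w.map r).prod with hρ
  have hwj : ((w ++ [j]).map r).prod = ρ * r j := by simp [hρ]
  -- choose level
  obtain ⟨k', hk1, hk2⟩ := exists_nat_pow_near_of_lt_one (x := κ * ρ / R) (y := lam)
    (by positivity) (by rw [div_le_one hRpos]; nlinarith) h0 h1
  rw [lt_div_iff₀ hRpos] at hk1
  rw [div_le_iff₀ hRpos] at hk2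
  have hk2' : ρ ≤ R / (κ * lam) * lam ^ (k' + 1) := by
    have : R / (κ * lam) * lam ^ (k' + 1) = lam ^ k' * R / κ := by
      rw [pow_succ]
      field_simp
    rw [this, le_div_iff₀ hκ]; linarith
  have hmain : ∀ v, (v.map r).prod ≤ ρ → ρ * min rm 1 ≤ (v.map r).prod → 
      ∃ G ∈ Γ.powerset, (μH[s] (f '' cylinder g F v)).toReal =
        (lam ^ (k' + 1)) ^ s * V G := by
    intro v hv1 hv2
    simp only [hV]
    apply piece_meas lam n b h0 E hEattr hEne Γ C hΓ R
      (fun x hx y hy => (hRE hx hy).trans hRE') s hs (k' + 1)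
    · rw [← hfim]; exact Set.image_mono (hcylF v)
    · exact (cyl_nonempty g F hFne v).image f
    · rintro _ ⟨x, hx, rfl⟩ _ ⟨y, hy, rfl⟩
      have a1 := (hbilip x (hcylF v hx) y (hcylF v hy)).2
      have a2 := cyl_diam g F r hr hg RF (fun x hx y hy => hRF hx hy) v x hx y hy
      calc _ ≤ Cf * dist x y := a1
        _ ≤ Cf * (ρ * RF) := by
          apply mul_le_mul_of_nonneg_left _ hCf.le
          exact a2.trans (mul_le_mul_of_nonneg_right hv1 hRF0)
        _ = Cf * RF * ρ := by ring
        _ ≤ Cf * RF * (R / (κ * lam) * lam ^ (k' + 1)) :=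
          mul_le_mul_of_nonneg_left hk2' (by positivity)
        _ = C * lam ^ (k' + 1) := by rw [hCdef]; ring
    · rintro _ ⟨x, hx, rfl⟩ y hy hyn
      rw [← hfim] at hy
      obtain ⟨y, hyF, rfl⟩ := hy
      have hyv : y ∉ cylinder g F v := fun h => hyn ⟨y, h, rfl⟩
      have a1 := (hbilip x (hcylF v hx) y hyF).1
      have a2 := cyl_sep g F r hr hg hFattr c hc hcsep v x hx y hyF hyv
      calc _ < κ * ρ := hk1
        _ = Cf⁻¹ * ((ρ * min rm 1) * c) := by rw [hκdef]; ring
        _ ≤ Cf⁻¹ * ((v.map r).prod * c) := by gcongr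
        _ ≤ Cf⁻¹ * dist x y := by gcongr
        _ ≤ _ := a1
  obtain ⟨G, hG, hGe⟩ := hmain w le_rfl (by
    have : min rm 1 ≤ 1 := min_le_right _ _
    nlinarith)
  obtain ⟨G', hG', hGe'⟩ := hmain (w ++ [j])
    (by rw [hwj]; have := (hr j).2; nlinarith)
    (by
      rw [hwj]
      exact mul_le_mul_of_nonneg_left ((min_le_left _ _).trans (hrml j)) hw0.le)
  rw [hGe, hGe', cyl_meas F g r hr hg s hs, cyl_meas F g r hr hg s hs, hwj, ← hρ]
  by_cases hM : (μH[s] F).toReal = 0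
  · left; simp [hM]
  right
  refine ⟨((G', G), j), ⟨⟨hG', hG⟩, trivial⟩, ?_⟩
  simp only
  rw [Real.mul_rpow hw0.le (hr j).1.le]
  have e1 : ρ ^ s ≠ 0 := (Real.rpow_pos_of_pos hw0 s).ne'
  have e2 : (r j) ^ s ≠ 0 := (Real.rpow_pos_of_pos (hr j).1 s).ne'
  have e3 : (lam ^ (k' + 1)) ^ s ≠ 0 := (Real.rpow_pos_of_pos (by positivity) s).ne'
  by_cases hVG : V G = 0
  · simp [hVG]
  field_simp
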